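/- arXiv:1311.0502 — 7 statements merged into one kernel-verified Lean document; each statement's English description precedes it below -/
import Mathlib

section
/- Let α be a join-semilattice with a least element ⊥ which is Noetherian, i.e. every nonempty totally ordered subset of α that is bounded above has a greatest element. Then for every family (x_i)_{i∈I} of elements of α that admits an upper bound, there exists a finite subset J ⊆ I such that x_i ≤ ⋁_{j∈J} x_j for all i ∈ I; in particular the family has a least upper bound, equal to this finite join. -/
/-!
The joins of finite subfamilies form a directed set with the same upper bounds as the family
itself. By Zorn's lemma, a nonempty bounded set in a Noetherian order has a maximal element, and a
maximal element of a directed set is its greatest element; a greatest finite join is then the least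
upper bound of the family.
-/

open Set

/-- The Noetherian condition on spans. It is stated for chains rather than as well-foundedness of
`>` because only bounded chains are constrained: `ℕ` is Noetherian in this sense. -/
def IsNoetherianOrder (α : Type*) [LE α] : Prop :=
  ∀ ⦃S : Set α⦄, S.Nonempty → IsChain (· ≤ ·) S → BddAbove S → ∃ m, IsGreatest S m

namespace IsNoetherianOrder

variable {α : Type*} [Preorder α] {s : Set α}

theorem exists_maximal (hα : IsNoetherianOrder α) (hne : s.Nonempty) (hbdd : BddAbove s) :
    ∃ m, Maximal (· ∈ s) m := by
  obtain ⟨a, ha⟩ := hne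
  have chain_bounded_in : ∀ c ⊆ s, IsChain (· ≤ ·) c → ∀ y ∈ c, ∃ ub ∈ s, ∀ z ∈ c, z ≤ ub := by
    intro c hcs hc y hy
    obtain ⟨m, hmc, hm⟩ := hα ⟨y, hy⟩ hc (hbdd.mono hcs)
    exact ⟨m, hcs hmc, hm⟩
  obtain ⟨m, -, hm⟩ := zorn_le_nonempty₀ s chain_bounded_in a ha
  exact ⟨m, hm⟩

theorem exists_isGreatest_of_directedOn (hα : IsNoetherianOrder α) (hne : s.Nonempty)
    (hdir : DirectedOn (· ≤ ·) s) (hbdd : BddAbove s) : ∃ m, IsGreatest s m := by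
  obtain ⟨m, hm⟩ := hα.exists_maximal hne hbdd
  exact ⟨m, hm.prop, hdir.is_top_of_is_max hm.prop fun _ ha hma => hm.le_of_ge ha hma⟩

end IsNoetherianOrder

section FinsetSup

variable {α ι : Type*} [SemilatticeSup α] [OrderBot α]

theorem directedOn_range_finset_sup (f : ι → α) :
    DirectedOn (· ≤ ·) (range fun J : Finset ι => J.sup f) := by
  classical
  have sup_monotone : Monotone fun J : Finset ι => J.sup f := fun _ _ => Finset.sup_mono
  exact directedOn_range.mpr sup_monotone.directed_le

theorem upperBounds_range_finset_sup (f : ι → α) :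
    upperBounds (range fun J : Finset ι => J.sup f) = upperBounds (range f) := by
  ext b
  simp only [mem_upperBounds, forall_mem_range, Finset.sup_le_iff]
  exact ⟨fun h i => h {i} i (Finset.mem_singleton_self i), fun h _ i _ => h i⟩

end FinsetSup

/-- A span (join-semilattice with ⊥) is Noetherian if every nonempty totally ordered
subset that is bounded above has a greatest element. Then any family of elements
admitting an upper bound has a least upper bound, achieved as a finite join. -/
theorem stmt0 {α : Type*} [SemilatticeSup α] [OrderBot α]
    (hNoeth : ∀ S : Set α, S.Nonempty → IsChain (· ≤ ·) S → BddAbove S →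
      ∃ m ∈ S, ∀ y ∈ S, y ≤ m)
    {I : Type*} (x : I → α) (hbdd : BddAbove (Set.range x)) :
    ∃ J : Finset I, (∀ i : I, x i ≤ J.sup x) ∧ IsLUB (Set.range x) (J.sup x) := by
  have hα : IsNoetherianOrder α := hNoeth
  have hbdd_sup : BddAbove (range fun J : Finset I => J.sup x) := by
    rwa [BddAbove, upperBounds_range_finset_sup]
  obtain ⟨_, ⟨J, rfl⟩, hJ⟩ := hα.exists_isGreatest_of_directedOn (range_nonempty _)
    (directedOn_range_finset_sup x) hbdd_sup
  have hlub : IsLUB (range x) (J.sup x) :=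
    (isLUB_congr (upperBounds_range_finset_sup x)).mp (IsGreatest.isLUB ⟨⟨J, rfl⟩, hJ⟩)
  exact ⟨J, fun i => hlub.1 (mem_range_self i), hlub⟩
end

section
/- Let L be a complete lattice. The following are equivalent: (1) L is compactly generated, i.e. every element is the supremum of the compact elements below it; (2) every element of L is the supremum of some set of elements x each of which is locally compact, meaning that the top element of the complete lattice {y ∈ L | y ≤ x} is a compact element of that lattice, AND binary meets in L distribute over suprema of directed sets: for every a ∈ L and every directed subset S ⊆ L, a ⊓ sSup S = ⨆_{s∈S} (a ⊓ s). -/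
/-!
The inclusion of `{y | y ≤ x}` into `L` is left adjoint to `x ⊓ ·`, and a left adjoint preserves
compact elements as soon as its right adjoint is Scott continuous. So when binary meets distribute
over directed suprema, every locally compact `x`, being the image of the top element of
`{y | y ≤ x}`, is compact in `L`.
-/

theorem isCompactElement_l_of_scottContinuous_u {α β : Type*} [PartialOrder α] [PartialOrder β]
    {l : α → β} {u : β → α} (gc : GaloisConnection l u) (hu : ScottContinuous u) {k : α}
    (hk : IsCompactElement k) : IsCompactElement (l k) := by
  intro s b hne hdir hb hkb
  obtain ⟨_, ⟨y, hy, rfl⟩, hky⟩ :=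
    hk (u '' s) (u b) (hne.image u) (hdir.mono_comp gc.monotone_u) (hu hne hdir hb) (gc.le_u hkb)
  exact ⟨y, hy, gc.l_le hky⟩

theorem scottContinuous_of_orderEmbedding_comp {α β γ : Type*} [Preorder α] [Preorder β]
    [Preorder γ] (e : β ↪o γ) {f : α → β} (h : ScottContinuous (e ∘ f)) : ScottContinuous f := by
  intro s hne hdir a ha
  have isLUB_image : IsLUB (e '' (f '' s)) (e (f a)) :=
    Set.image_comp e f s ▸ h hne hdir ha
  exact isLUB_image.of_image e.le_iff_le

theorem scottContinuous_of_map_sSup {α β : Type*} [CompleteSemilatticeSup α]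
    [CompleteSemilatticeSup β] {f : α → β}
    (h : ∀ s : Set α, s.Nonempty → DirectedOn (· ≤ ·) s → f (sSup s) = sSup (f '' s)) :
    ScottContinuous f := by
  intro s hne hdir a ha
  rw [← ha.sSup_eq, h s hne hdir]
  exact isLUB_sSup _

section SemilatticeInf

variable {α : Type*} [SemilatticeInf α]

theorem galoisConnection_coe_Iic_inf (a : α) :
    GaloisConnection ((↑) : Set.Iic a → α) (fun b => ⟨a ⊓ b, inf_le_left⟩) :=
  fun c _ => (le_inf_iff.trans (and_iff_right c.2)).symm

theorem isCompactElement_coe_Iic {a : α} (ha : ScottContinuous (a ⊓ ·)) {k : Set.Iic a}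
    (hk : IsCompactElement k) : IsCompactElement (k : α) :=
  isCompactElement_l_of_scottContinuous_u (galoisConnection_coe_Iic_inf a)
    (scottContinuous_of_orderEmbedding_comp (OrderEmbedding.subtype (· ∈ Set.Iic a)) ha) hk

end SemilatticeInf

/-- A complete lattice is compactly generated iff every element is a supremum of
locally compact elements (elements `x` such that `⊤` is compact in `Set.Iic x`)
and binary meets distribute over directed suprema. -/
theorem stmt3 {L : Type*} [CompleteLattice L] :
    (∀ a : L, a = sSup {c : L | IsCompactElement c ∧ c ≤ a}) ↔
    ((∀ a : L, ∃ S : Set L,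
        (∀ x ∈ S, IsCompactElement (⊤ : Set.Iic x)) ∧ a = sSup S) ∧
      ∀ (a : L) (S : Set L), DirectedOn (· ≤ ·) S →
        a ⊓ sSup S = ⨆ s ∈ S, a ⊓ s) := by
  constructor
  · intro h
    have : IsCompactlyGenerated L := ⟨fun a => ⟨_, fun _ hc => hc.1, (h a).symm⟩⟩
    exact ⟨fun a => ⟨_, fun _ hc => Set.Iic.isCompactElement hc.1, h a⟩,
      fun _ _ hS => hS.inf_sSup_eq⟩
  · rintro ⟨exists_locallyCompact, inf_sSup_eq⟩ a
    have scottContinuous_inf (x : L) : ScottContinuous (x ⊓ ·) :=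
      scottContinuous_of_map_sSup fun s _ hs => by rw [inf_sSup_eq x s hs, sSup_image]
    have : IsCompactlyGenerated L := ⟨fun b => by
      obtain ⟨S, hS, rfl⟩ := exists_locallyCompact b
      exact ⟨S, fun x hx => isCompactElement_coe_Iic (scottContinuous_inf x) (hS x hx), rfl⟩⟩
    exact (sSup_compact_le_eq a).symm
end

section
/- Let A be an additive commutative group, α a join-semilattice with least element ⊥, and ν : A → α a function satisfying ν 0 = ⊥, ν(−x) = ν x for all x, and the ultrametric inequality ν(x + y) ≤ ν x ⊔ ν y for all x, y. Then for every finite subset s = {x₁, …, xₙ} of A, the finite join ν x₁ ⊔ ⋯ ⊔ ν xₙ is the least upper bound of the image of ν over the subgroup of A generated by s: IsLUB (ν '' (closure of s as additive subgroup)) (⨆_{x∈s} ν x). -/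
/-- A non-Archimedean seminorm on an additive group with values in a span, i.e. a join-semilattice
with `⊥`. It is an unbundled predicate, unlike Mathlib's `NonarchAddGroupSeminorm`, whose values are
real numbers. -/
structure IsSpanSeminorm {A α : Type*} [AddGroup A] [SemilatticeSup α] [OrderBot α]
    (ν : A → α) : Prop where
  map_zero : ν 0 = ⊥
  map_neg (x : A) : ν (-x) = ν x
  map_add_le_sup (x y : A) : ν (x + y) ≤ ν x ⊔ ν y

namespace IsSpanSeminorm

variable {A α : Type*} [AddGroup A] [SemilatticeSup α] [OrderBot α] {ν : A → α}

/-- The closed ball `{x | ν x ≤ b}` around `0`, as a subgroup. It turns upper bounds of `ν` on a set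
into inclusions of that set in a subgroup. -/
def closedBall (hν : IsSpanSeminorm ν) (b : α) : AddSubgroup A where
  carrier := ν ⁻¹' Set.Iic b
  zero_mem' := hν.map_zero.trans_le bot_le
  add_mem' {x y} hx hy := (hν.map_add_le_sup x y).trans (sup_le hx hy)
  neg_mem' {x} hx := (hν.map_neg x).trans_le hx

theorem upperBounds_image_closure (hν : IsSpanSeminorm ν) (S : Set A) :
    upperBounds (ν '' AddSubgroup.closure S) = upperBounds (ν '' S) := by
  ext b
  simp only [mem_upperBounds_iff_subset_Iic, Set.image_subset_iff]
  exact AddSubgroup.closure_le (hν.closedBall b)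

end IsSpanSeminorm

theorem stmt9_general {A α : Type*} [AddGroup A] [SemilatticeSup α] [OrderBot α] {ν : A → α}
    (hν : IsSpanSeminorm ν) (S : Set A) {c : α} :
    IsLUB (ν '' AddSubgroup.closure S) c ↔ IsLUB (ν '' S) c :=
  isLUB_congr (hν.upperBounds_image_closure S)

/-- For a non-Archimedean seminorm `ν` on an abelian group with values in a
join-semilattice with ⊥, the finite join of `ν` over a finite set `s` is the least
upper bound of `ν` on the subgroup generated by `s`. -/
theorem stmt9 {A : Type*} [AddCommGroup A] {α : Type*} [SemilatticeSup α] [OrderBot α]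
    (ν : A → α) (h0 : ν 0 = ⊥) (hneg : ∀ x : A, ν (-x) = ν x)
    (hadd : ∀ x y : A, ν (x + y) ≤ ν x ⊔ ν y) (s : Finset A) :
    IsLUB (ν '' (AddSubgroup.closure (s : Set A) : Set A)) (s.sup ν) :=
  (stmt9_general ⟨h0, hneg, hadd⟩ s).mpr s.isLUB_sup
end

section
/- Let α be a commutative idempotent semiring (a commutative semiring with a + a = a for all a, canonically partially ordered by a ≤ b ↔ a + b = b) which is contracting, i.e. a ≤ 1 for all a ∈ α. Then the map f ↦ f⁻¹({false}) is a bijection from the set of functions f : α → Bool satisfying f 0 = false, f 1 = true, f (a + b) = f a || f b, and f (a · b) = f a && f b, onto the set of subsets I ⊆ α satisfying: 0 ∈ I; 1 ∉ I; a, b ∈ I implies a + b ∈ I; a ≤ b and b ∈ I imply a ∈ I; b ∈ I implies a · b ∈ I for all a; and a · b ∈ I implies a ∈ I or b ∈ I (I is an open prime semiring ideal). -/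
/-!
A function `f : α → Bool` is the same thing as its zero set `I = f ⁻¹' {false}`. Under this
correspondence `f` preserves sums iff `a + b ∈ I ↔ a ∈ I ∧ b ∈ I`; as `a, b ≤ a + b` in an
idempotent semiring, this says that `I` is closed under sums and downward closed. Likewise `f`
preserves products iff `a * b ∈ I ↔ a ∈ I ∨ b ∈ I`, which says that `I` absorbs products and is
prime.
-/

section Definitions

variable {α : Type*} [Zero α] [One α] [Add α] [Mul α]

/-- Points of `α` with values in the Boolean semifield `𝔹`, that is, semiring homomorphisms
`α → 𝔹`. Here `𝔹` is encoded as `Bool`, with `||` as addition and `&&` as multiplication. -/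
def IsBoolPoint (f : α → Bool) : Prop :=
  f 0 = false ∧ f 1 = true ∧
    (∀ a b : α, f (a + b) = (f a || f b)) ∧
    (∀ a b : α, f (a * b) = (f a && f b))

/-- Open prime semiring ideals, the kernels of points. "Open" means downward closed for the
canonical order `a ≤ b`, which is spelled `a + b = b`. Absorption is required on the left only, so
the notion is meant for commutative multiplications. -/
def IsOpenPrimeIdeal (I : Set α) : Prop :=
  0 ∈ I ∧ (1 : α) ∉ I ∧
    (∀ a ∈ I, ∀ b ∈ I, a + b ∈ I) ∧
    (∀ a b : α, a + b = b → b ∈ I → a ∈ I) ∧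
    (∀ a b : α, b ∈ I → a * b ∈ I) ∧
    (∀ a b : α, a * b ∈ I → a ∈ I ∨ b ∈ I)

end Definitions

section ZeroSet

variable {α : Type*}

theorem preimage_false_bijective :
    Function.Bijective (fun f : α → Bool => f ⁻¹' {false}) := by
  classical
  exact Function.bijective_iff_has_inverse.mpr
    ⟨fun I a => decide (a ∉ I), fun f => by ext; simp, fun I => by ext; simp⟩

theorem forall_map_add_eq_or_iff [Add α] {f : α → Bool} :
    (∀ a b, f (a + b) = (f a || f b)) ↔
      ∀ a b, a + b ∈ f ⁻¹' {false} ↔ a ∈ f ⁻¹' {false} ∧ b ∈ f ⁻¹' {false} := by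
  simp only [Set.mem_preimage, Set.mem_singleton_iff, ← Bool.or_eq_false_iff,
    Bool.coe_false_iff_false, Bool.not_inj_iff]

theorem forall_map_mul_eq_and_iff [Mul α] {f : α → Bool} :
    (∀ a b, f (a * b) = (f a && f b)) ↔
      ∀ a b, a * b ∈ f ⁻¹' {false} ↔ a ∈ f ⁻¹' {false} ∨ b ∈ f ⁻¹' {false} := by
  simp only [Set.mem_preimage, Set.mem_singleton_iff, ← Bool.and_eq_false_iff,
    Bool.coe_false_iff_false, Bool.not_inj_iff]

end ZeroSet

section Ideal

variable {α : Type*} {I : Set α}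

theorem forall_add_mem_iff_and [AddCommSemigroup α] (hidem : ∀ a : α, a + a = a) :
    (∀ a b, a + b ∈ I ↔ a ∈ I ∧ b ∈ I) ↔
      (∀ a ∈ I, ∀ b ∈ I, a + b ∈ I) ∧ (∀ a b, a + b = b → b ∈ I → a ∈ I) := by
  constructor
  · intro h
    exact ⟨fun a ha b hb => (h a b).mpr ⟨ha, hb⟩,
      fun a b hab hb => ((h a b).mp (hab.symm ▸ hb)).1⟩
  · rintro ⟨hadd, hlower⟩ a b
    have left_le : a + (a + b) = a + b := by rw [← add_assoc, hidem]
    have right_le : b + (a + b) = a + b := by rw [add_left_comm, hidem]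
    exact ⟨fun h => ⟨hlower a _ left_le h, hlower b _ right_le h⟩, fun h => hadd a h.1 b h.2⟩

theorem forall_mul_mem_iff_or [CommMagma α] :
    (∀ a b, a * b ∈ I ↔ a ∈ I ∨ b ∈ I) ↔
      (∀ a b, b ∈ I → a * b ∈ I) ∧ (∀ a b, a * b ∈ I → a ∈ I ∨ b ∈ I) := by
  constructor
  · intro h
    exact ⟨fun a b hb => (h a b).mpr (.inr hb), fun a b => (h a b).mp⟩
  · rintro ⟨hmul, hprime⟩ a b
    exact ⟨hprime a b, fun h => h.elim (fun ha => mul_comm b a ▸ hmul b a ha) (hmul a b)⟩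

end Ideal

theorem isOpenPrimeIdeal_preimage_false_iff {α : Type*} [AddCommSemigroup α] [CommMagma α]
    [Zero α] [One α] (hidem : ∀ a : α, a + a = a) {f : α → Bool} :
    IsOpenPrimeIdeal (f ⁻¹' {false}) ↔ IsBoolPoint f := by
  have zero_mem : 0 ∈ f ⁻¹' {false} ↔ f 0 = false := Iff.rfl
  have one_notMem : 1 ∉ f ⁻¹' {false} ↔ f 1 = true := by simp
  rw [IsOpenPrimeIdeal, IsBoolPoint, zero_mem, one_notMem, forall_map_add_eq_or_iff,
    forall_map_mul_eq_and_iff, forall_add_mem_iff_and hidem, forall_mul_mem_iff_or, and_assoc]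

theorem stmt12_general {α : Type*} [AddCommSemigroup α] [CommMagma α] [Zero α] [One α]
    (hidem : ∀ a : α, a + a = a) :
    Set.BijOn (fun f : α → Bool => f ⁻¹' {false})
      {f | IsBoolPoint f} {I | IsOpenPrimeIdeal I} :=
  (Equiv.ofBijective _ preimage_false_bijective).bijOn fun _ =>
    isOpenPrimeIdeal_preimage_false_iff hidem

/-- For a contracting commutative idempotent semiring `α` (with canonical order
`a ≤ b ↔ a + b = b`), kernels set up a bijection between semiring homomorphisms
`α → Bool` (the Boolean semifield) and open prime semiring ideals of `α`. -/
theorem stmt12 {α : Type*} [CommSemiring α]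
    (hidem : ∀ a : α, a + a = a) (hcontr : ∀ a : α, a + 1 = 1) :
    Set.BijOn (fun f : α → Bool => f ⁻¹' {false})
      {f : α → Bool | f 0 = false ∧ f 1 = true ∧
        (∀ a b : α, f (a + b) = (f a || f b)) ∧
        (∀ a b : α, f (a * b) = (f a && f b))}
      {I : Set α | 0 ∈ I ∧ (1 : α) ∉ I ∧
        (∀ a ∈ I, ∀ b ∈ I, a + b ∈ I) ∧
        (∀ a b : α, a + b = b → b ∈ I → a ∈ I) ∧
        (∀ a b : α, b ∈ I → a * b ∈ I) ∧
        (∀ a b : α, a * b ∈ I → a ∈ I ∨ b ∈ I)} :=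
  stmt12_general hidem
end

section
/- Let α be a commutative idempotent semiring (a commutative semiring with a + a = a, canonically partially ordered by a ≤ b ↔ a + b = b), let S₁, …, S_k ∈ α satisfy Sᵢ ≤ 1 for each i, and put S = S₁ + ⋯ + S_k (the join of the Sᵢ). Then for all a, b ∈ α: there exists n with a·Sⁿ ≤ b and b·Sⁿ ≤ a, if and only if for every i ∈ {1,…,k} there exists nᵢ with a·Sᵢ^{nᵢ} ≤ b and b·Sᵢ^{nᵢ} ≤ a. -/
/-!
Say `b` absorbs `a` if `a + b = b`. If `1` absorbs `z`, then each sum with a summand `c` absorbs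
`c * z`; in particular, the set of elements absorbed by `b` is stable under multiplication by `z`.
Let `1` absorb `x` and `y`. Every monomial of `a * (x + y) ^ (n + m)` is a multiple of `a * x ^ n`
or of `a * y ^ m`, so `b` absorbs the whole power if it absorbs these two; splitting off one factor
`x + y` at a time avoids binomial coefficients. Conversely, `x ^ n` is a summand of `(x + y) ^ n`,
so an element absorbing `a * (x + y) ^ n` absorbs `a * x ^ (n + 1)`.
-/

section Semiring

variable {α : Type*} [Semiring α] {a b c x y z : α}

/-- A contracting element, that is, `z ≤ 1`. The canonical order is spelled out as an equation, so
that the notion makes sense in every semiring. -/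
def IsContracting (z : α) : Prop :=
  z + 1 = 1

/-- The elements `a` and `b` become identified in the cellular localisation at `s`:
`a * s ^ n ≤ b` and `b * s ^ n ≤ a` for some `n`, with the canonical order spelled out as in
`IsContracting`. -/
def CellularEq (s a b : α) : Prop :=
  ∃ n : ℕ, a * s ^ n + b = b ∧ b * s ^ n + a = a

theorem isContracting_zero : IsContracting (0 : α) :=
  zero_add 1

theorem IsContracting.add (hx : IsContracting x) (hy : IsContracting y) :
    IsContracting (x + y) := by
  rw [IsContracting, add_assoc, hy, hx]

theorem IsContracting.sum {ι : Type*} {s : Finset ι} {S : ι → α}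
    (hS : ∀ i ∈ s, IsContracting (S i)) : IsContracting (∑ i ∈ s, S i) :=
  Finset.sum_induction S IsContracting (fun _ _ ↦ IsContracting.add) isContracting_zero hS

theorem IsContracting.mul_add_add_eq (hz : IsContracting z) (c d : α) :
    c * z + (c + d) = c + d := by
  rw [← add_assoc, ← mul_add_one, hz, mul_one]

theorem IsContracting.mul_add_eq_right (hz : IsContracting z) (h : c + b = b) :
    c * z + b = b := by
  simpa only [h] using hz.mul_add_add_eq c b

theorem IsContracting.mul_pow_add_eq_right (hz : IsContracting z) (h : c + b = b) (n : ℕ) :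
    c * z ^ n + b = b := by
  induction n with
  | zero => rwa [pow_zero, mul_one]
  | succ n ih =>
    rw [pow_succ, ← mul_assoc]
    exact hz.mul_add_eq_right ih

theorem cellularEq_zero (a b : α) : CellularEq 0 a b :=
  ⟨1, by simp⟩

end Semiring

section CommSemiring

variable {α : Type*} [CommSemiring α] {a b x y : α}

theorem IsContracting.mul_add_pow_add_eq_right (hx : IsContracting x) (hy : IsContracting y)
    {n m : ℕ} (hn : a * x ^ n + b = b) (hm : a * y ^ m + b = b) :
    a * (x + y) ^ (n + m) + b = b := by
  induction n generalizing a m with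
  | zero =>
    rw [pow_zero, mul_one] at hn
    exact (hx.add hy).mul_pow_add_eq_right hn _
  | succ n ihn =>
    induction m generalizing a with
    | zero =>
      rw [pow_zero, mul_one] at hm
      exact (hx.add hy).mul_pow_add_eq_right hm _
    | succ m ihm =>
      have x_part : a * x * (x + y) ^ (n + (m + 1)) + b = b := by
        refine ihn ?_ ?_
        · rwa [mul_assoc, ← pow_succ']
        · rw [mul_right_comm]
          exact hx.mul_add_eq_right hm
      have y_part : a * y * (x + y) ^ (n + 1 + m) + b = b := by
        refine ihm ?_ ?_
        · rw [mul_right_comm]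
          exact hy.mul_add_eq_right hn
        · rwa [mul_assoc, ← pow_succ']
      calc a * (x + y) ^ (n + 1 + (m + 1)) + b
          = a * x * (x + y) ^ (n + (m + 1)) + (a * y * (x + y) ^ (n + 1 + m) + b) := by ring
        _ = b := by rw [y_part, x_part]

-- The exponent grows by one because a sum need not absorb a summand `c`,
-- only `c * x`.
theorem IsContracting.mul_pow_succ_add_eq_right (hx : IsContracting x) {n : ℕ}
    (h : a * (x + y) ^ n + b = b) : a * x ^ (n + 1) + b = b := by
  obtain ⟨r, hr⟩ : ∃ r, (x + y) ^ n = x ^ n + r :=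
    let ⟨k, hk⟩ := Polynomial.powAddExpansion x y n
    ⟨_, hk.trans (add_assoc _ _ _)⟩
  have hb : a * x ^ n + (a * r + b) = b := by rw [← add_assoc, ← mul_add, ← hr, h]
  simpa only [hb, mul_assoc, ← pow_succ] using hx.mul_add_add_eq (a * x ^ n) (a * r + b)

theorem CellularEq.of_add_left (hx : IsContracting x) (h : CellularEq (x + y) a b) :
    CellularEq x a b :=
  let ⟨n, hab, hba⟩ := h
  ⟨n + 1, hx.mul_pow_succ_add_eq_right hab, hx.mul_pow_succ_add_eq_right hba⟩

theorem CellularEq.add (hx : IsContracting x) (hy : IsContracting y)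
    (hxab : CellularEq x a b) (hyab : CellularEq y a b) : CellularEq (x + y) a b :=
  let ⟨n, hxa, hxb⟩ := hxab
  let ⟨m, hya, hyb⟩ := hyab
  ⟨n + m, hx.mul_add_pow_add_eq_right hy hxa hya, hx.mul_add_pow_add_eq_right hy hxb hyb⟩

theorem cellularEq_add_iff (hx : IsContracting x) (hy : IsContracting y) :
    CellularEq (x + y) a b ↔ CellularEq x a b ∧ CellularEq y a b :=
  ⟨fun h ↦ ⟨h.of_add_left hx, (add_comm x y ▸ h).of_add_left hy⟩, fun h ↦ h.1.add hx hy h.2⟩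

theorem stmt14_general {ι : Type*} (s : Finset ι) (S : ι → α)
    (hS : ∀ i ∈ s, IsContracting (S i)) (a b : α) :
    CellularEq (∑ i ∈ s, S i) a b ↔ ∀ i ∈ s, CellularEq (S i) a b := by
  induction s using Finset.cons_induction with
  | empty => simp [cellularEq_zero]
  | cons i s hi ih =>
    rw [Finset.forall_mem_cons] at hS
    rw [Finset.sum_cons, cellularEq_add_iff hS.1 (.sum hS.2), ih hS.2, Finset.forall_mem_cons]

end CommSemiring

/-- Elementwise form of the cellular cover formula: for contracting elements
`S i ≤ 1` with join `S = ∑ i, S i` in a commutative idempotent semiring (canonical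
order `a ≤ b ↔ a + b = b`), two elements are identified in the cellular localisation
at `S` iff they are identified in every cellular localisation at the `S i`. -/
theorem stmt14 {α : Type*} [CommSemiring α] (hidem : ∀ a : α, a + a = a)
    {k : ℕ} (S : Fin k → α) (hS : ∀ i, S i + 1 = 1) (a b : α) :
    (∃ n : ℕ, a * (∑ i, S i) ^ n + b = b ∧ b * (∑ i, S i) ^ n + a = a) ↔
    (∀ i : Fin k, ∃ n : ℕ, a * S i ^ n + b = b ∧ b * S i ^ n + a = a) := by
  simpa only [CellularEq, Finset.mem_univ, true_imp_iff] using
    stmt14_general Finset.univ S (fun i _ ↦ hS i) a b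
end

section
/- Let α be a commutative idempotent semiring (a commutative semiring with a + a = a, canonically partially ordered by a ≤ b ↔ a + b = b) and let S ∈ α satisfy S ≤ 1. Then the smallest ring congruence on α containing the single pair (S, 1) (Mathlib's RingConGen of the relation relating exactly S and 1) relates a and b if and only if there exists n ∈ ℕ with a·Sⁿ ≤ b and b·Sⁿ ≤ a. -/
/-!
Inverting a contracting element `S` makes `a` lie below `b` as soon as `a * S ^ n ≤ b` for some
`n`. For central `S ≤ 1` this is a preorder compatible with addition and multiplication, so its
antisymmetrization is a ring congruence, and it identifies `S` with `1`. Conversely, if a congruence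
`c` identifies `S` with `1` and addition is idempotent, then multiplying by `S ^ n` is invisible
modulo `c`, so that `a * S ^ n + b = b` forces `c (a + b) b`; two elements that lie below each other
are therefore both congruent to their sum.
-/

/-- The preorder of the cellular localisation at `S`, expressed on representatives in `α`: `a` lies
below `b` once `S` is identified with `1`. -/
def CellularLE {α : Type*} [Monoid α] [LE α] (S a b : α) : Prop :=
  ∃ n : ℕ, a * S ^ n ≤ b

section Monoid

variable {α : Type*} [Monoid α] [Preorder α] {S a b c d : α}

theorem mul_pow_le_of_mul_pow_le [MulLeftMono α] (hS : S ≤ 1) {m n : ℕ} (hmn : m ≤ n)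
    (h : a * S ^ m ≤ b) : a * S ^ n ≤ b :=
  (mul_le_mul_right (pow_le_pow_right_of_le_one' hS hmn) a).trans h

namespace CellularLE

theorem of_le (h : a ≤ b) : CellularLE S a b :=
  ⟨0, by rwa [pow_zero, mul_one]⟩

theorem one_self : CellularLE S 1 S :=
  ⟨1, by rw [pow_one, one_mul]⟩

theorem trans [MulRightMono α] (hab : CellularLE S a b) (hbc : CellularLE S b c) :
    CellularLE S a c := by
  obtain ⟨m, hm⟩ := hab
  obtain ⟨n, hn⟩ := hbc
  refine ⟨m + n, ?_⟩
  calc a * S ^ (m + n) = a * S ^ m * S ^ n := by rw [pow_add, mul_assoc]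
    _ ≤ b * S ^ n := by gcongr
    _ ≤ c := hn

instance [MulRightMono α] : IsPreorder α (CellularLE S) where
  refl _ := of_le le_rfl
  trans _ _ _ := trans

theorem mul [MulLeftMono α] [MulRightMono α] (hSc : Commute S c) (hab : CellularLE S a b)
    (hcd : CellularLE S c d) : CellularLE S (a * c) (b * d) := by
  obtain ⟨m, hm⟩ := hab
  obtain ⟨n, hn⟩ := hcd
  refine ⟨m + n, ?_⟩
  calc a * c * S ^ (m + n) = a * S ^ m * (c * S ^ n) := by
        rw [pow_add, (hSc.symm.pow_right m).mul_mul_mul_comm]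
    _ ≤ b * d := mul_le_mul' hm hn

end CellularLE

theorem antisymmRel_cellularLE_iff [MulLeftMono α] (hS : S ≤ 1) :
    AntisymmRel (CellularLE S) a b ↔ ∃ n : ℕ, a * S ^ n ≤ b ∧ b * S ^ n ≤ a := by
  constructor
  · rintro ⟨⟨m, hm⟩, ⟨n, hn⟩⟩
    exact ⟨max m n, mul_pow_le_of_mul_pow_le hS (le_max_left m n) hm,
      mul_pow_le_of_mul_pow_le hS (le_max_right m n) hn⟩
  · rintro ⟨n, hab, hba⟩
    exact ⟨⟨n, hab⟩, ⟨n, hba⟩⟩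

end Monoid

section Semiring

variable {α : Type*} [Semiring α] [Preorder α] [IsOrderedAddMonoid α] [MulLeftMono α]
  {S a b c d : α}

theorem CellularLE.add (hS : S ≤ 1) (hab : CellularLE S a b) (hcd : CellularLE S c d) :
    CellularLE S (a + c) (b + d) := by
  obtain ⟨m, hm⟩ := hab
  obtain ⟨n, hn⟩ := hcd
  refine ⟨max m n, ?_⟩
  rw [add_mul]
  exact add_le_add (mul_pow_le_of_mul_pow_le hS (le_max_left m n) hm)
    (mul_pow_le_of_mul_pow_le hS (le_max_right m n) hn)

/-- The congruence whose quotient is the cellular localisation at a central contracting element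
`S`, given concretely as the antisymmetrization of `CellularLE S`. -/
def cellularCon [MulRightMono α] (hcomm : ∀ x, Commute S x) (hS : S ≤ 1) : RingCon α where
  toSetoid := AntisymmRel.setoid α (CellularLE S)
  add' h k := ⟨h.1.add hS k.1, h.2.add hS k.2⟩
  mul' h k := ⟨h.1.mul (hcomm _) k.1, h.2.mul (hcomm _) k.2⟩

end Semiring

section IdemSemiring

variable {α : Type*} [IdemSemiring α] {S a b : α}

theorem ringCon_add_right_of_cellularLE {c : RingCon α} (hc : c S 1) (h : CellularLE S a b) :
    c (a + b) b := by
  obtain ⟨n, hn⟩ := h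
  have hpow : c (S ^ n) 1 := one_pow (M := α) n ▸ c.pow n hc
  have hsum : c (a * S ^ n + b) (a * 1 + b) := c.add (c.mul (c.refl a) hpow) (c.refl b)
  rw [hn.add_eq_right, mul_one] at hsum
  exact c.symm hsum

theorem ringCon_of_antisymmRel_cellularLE {c : RingCon α} (hc : c S 1)
    (h : AntisymmRel (CellularLE S) a b) : c a b := by
  have hb : c (a + b) b := ringCon_add_right_of_cellularLE hc h.1
  have ha : c (a + b) a := add_comm b a ▸ ringCon_add_right_of_cellularLE hc h.2
  exact c.trans (c.symm ha) hb

theorem ringConGen_eq_cellularCon (hcomm : ∀ x, Commute S x) (hS : S ≤ 1) :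
    ringConGen (fun x y : α => x = S ∧ y = 1) = cellularCon hcomm hS := by
  apply le_antisymm
  · refine RingCon.ringConGen_le.2 ?_
    rintro _ _ ⟨rfl, rfl⟩
    exact ⟨.of_le hS, .one_self⟩
  · intro a b h
    exact ringCon_of_antisymmRel_cellularLE (RingCon.le_ringConGen _ _ ⟨rfl, rfl⟩) h

theorem stmt15_general (hcomm : ∀ x, Commute S x) (hS : S ≤ 1) (a b : α) :
    ringConGen (fun x y : α => x = S ∧ y = 1) a b ↔
    ∃ n : ℕ, a * S ^ n ≤ b ∧ b * S ^ n ≤ a := by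
  rw [ringConGen_eq_cellularCon hcomm hS]
  exact antisymmRel_cellularLE_iff hS

end IdemSemiring

/-- Concrete description of the cellular localisation of a commutative idempotent
semiring at a contracting element `S` (canonical order `a ≤ b ↔ a + b = b`): the ring
congruence generated by `S ∼ 1` relates `a` and `b` iff `a·Sⁿ ≤ b` and `b·Sⁿ ≤ a` for
some `n`. -/
theorem stmt15 {α : Type*} [CommSemiring α] (hidem : ∀ a : α, a + a = a)
    (S : α) (hS : S + 1 = 1) (a b : α) :
    ringConGen (fun x y : α => x = S ∧ y = 1) a b ↔
    ∃ n : ℕ, a * S ^ n + b = b ∧ b * S ^ n + a = a :=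
  letI := IdemSemiring.ofSemiring hidem
  stmt15_general (Commute.all S) hS a b
end

section
/- Let A be a commutative ring and β a commutative idempotent semiring (a commutative semiring with b + b = b, canonically partially ordered by b ≤ c ↔ b + c = c). Let w : A → β satisfy: w 0 = 0, w 1 = 1, w(a·b) = w a · w b for all a, b, w(a + b) ≤ w a + w b for all a, b (the ultrametric inequality, since + in β is join), and w a ≤ 1 for all a (w is integral/contracting). Then there exists a unique function W from the set of finitely generated ideals of A to β such that W(span{a}) = w a for every a ∈ A, W(I ⊔ J) = W I + W J for all finitely generated ideals I, J, and W(I·J) = W I · W J for all finitely generated ideals I, J. -/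
/- A subadditive map `w` that does not increase under scalar multiplication attains its maximum over
a principal submodule at the generator, and the join of its suprema over `N` and `P` is its supremum
over `N ⊔ P`. Hence `w` has a supremum over every finitely generated submodule, and taking this
supremum is the only join-preserving extension of `w`. If `w` is multiplicative then so is the
extension, because products distribute over joins of submodules and over addition in the target. -/

section Extension

variable {R M β : Type*} [Semiring R] [AddCommMonoid M] [Module R M]

theorem fg_submodule_map_ext [Max β] {V W : {N : Submodule R M // N.FG} → β}
    (hsingleton : ∀ x : M, V ⟨Submodule.span R {x}, Submodule.fg_span_singleton x⟩ =
      W ⟨Submodule.span R {x}, Submodule.fg_span_singleton x⟩)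
    (hV : ∀ N P, V ⟨N.1 ⊔ P.1, N.2.sup P.2⟩ = V N ⊔ V P)
    (hW : ∀ N P, W ⟨N.1 ⊔ P.1, N.2.sup P.2⟩ = W N ⊔ W P) : V = W := by
  funext ⟨N, hN⟩
  induction N, hN using Submodule.fg_induction with
  | singleton x => exact hsingleton x
  | sup N P hN hP ihN ihP => rw [hV ⟨N, hN⟩ ⟨P, hP⟩, hW ⟨N, hN⟩ ⟨P, hP⟩, ihN, ihP]

theorem isLUB_image_span_singleton [Preorder β] {w : M → β}
    (hsmul : ∀ (r : R) (x : M), w (r • x) ≤ w x) (x : M) :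
    IsLUB (w '' (Submodule.span R {x} : Submodule R M)) (w x) := by
  refine IsGreatest.isLUB ⟨Set.mem_image_of_mem w (Submodule.mem_span_singleton_self x), ?_⟩
  rintro _ ⟨y, hy, rfl⟩
  obtain ⟨r, rfl⟩ := Submodule.mem_span_singleton.1 hy
  exact hsmul r x

variable [SemilatticeSup β] {w : M → β}

theorem isLUB_image_submodule_sup (hadd : ∀ x y : M, w (x + y) ≤ w x ⊔ w y)
    {N P : Submodule R M} {b c : β} (hb : IsLUB (w '' N) b) (hc : IsLUB (w '' P) c) :
    IsLUB (w '' (N ⊔ P : Submodule R M)) (b ⊔ c) := by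
  constructor
  · rintro _ ⟨x, hx, rfl⟩
    obtain ⟨y, hy, z, hz, rfl⟩ := Submodule.mem_sup.1 hx
    exact (hadd y z).trans
      (sup_le_sup (hb.1 (Set.mem_image_of_mem w hy)) (hc.1 (Set.mem_image_of_mem w hz)))
  · intro d hd
    have hd_of_le {Q : Submodule R M} (hQ : Q ≤ N ⊔ P) : d ∈ upperBounds (w '' Q) :=
      upperBounds_mono_set (Set.image_mono hQ) hd
    exact sup_le (hb.2 (hd_of_le le_sup_left)) (hc.2 (hd_of_le le_sup_right))

theorem exists_isLUB_image_of_fg (hsmul : ∀ (r : R) (x : M), w (r • x) ≤ w x)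
    (hadd : ∀ x y : M, w (x + y) ≤ w x ⊔ w y) {N : Submodule R M} (hN : N.FG) :
    ∃ b, IsLUB (w '' N) b := by
  induction N, hN using Submodule.fg_induction with
  | singleton x => exact ⟨w x, isLUB_image_span_singleton hsmul x⟩
  | sup N P _ _ ihN ihP =>
    obtain ⟨b, hb⟩ := ihN
    obtain ⟨c, hc⟩ := ihP
    exact ⟨b ⊔ c, isLUB_image_submodule_sup hadd hb hc⟩

theorem existsUnique_fg_submodule_map_sup (hsmul : ∀ (r : R) (x : M), w (r • x) ≤ w x)
    (hadd : ∀ x y : M, w (x + y) ≤ w x ⊔ w y) :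
    ∃! W : {N : Submodule R M // N.FG} → β,
      (∀ x, W ⟨Submodule.span R {x}, Submodule.fg_span_singleton x⟩ = w x) ∧
      ∀ N P, W ⟨N.1 ⊔ P.1, N.2.sup P.2⟩ = W N ⊔ W P := by
  choose W hW using fun N : {N : Submodule R M // N.FG} =>
    exists_isLUB_image_of_fg hsmul hadd N.2
  have hWspan x : W ⟨Submodule.span R {x}, Submodule.fg_span_singleton x⟩ = w x :=
    (hW _).unique (isLUB_image_span_singleton hsmul x)
  have hWsup N P : W ⟨N.1 ⊔ P.1, N.2.sup P.2⟩ = W N ⊔ W P :=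
    (hW _).unique (isLUB_image_submodule_sup hadd (hW N) (hW P))
  exact ⟨W, ⟨hWspan, hWsup⟩, fun V ⟨hVspan, hVsup⟩ =>
    fg_submodule_map_ext (fun x => (hVspan x).trans (hWspan x).symm) hVsup hWsup⟩

end Extension

section Multiplicative

variable {R A β : Type*} [CommSemiring R] [Semiring A] [Algebra R A]

theorem fg_submodule_map_mul [Distrib β] {W : {N : Submodule R A // N.FG} → β}
    (hsup : ∀ N P, W ⟨N.1 ⊔ P.1, N.2.sup P.2⟩ = W N + W P)
    (hsingleton : ∀ a b : A, W ⟨Submodule.span R {a * b}, Submodule.fg_span_singleton (a * b)⟩ =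
      W ⟨Submodule.span R {a}, Submodule.fg_span_singleton a⟩ *
        W ⟨Submodule.span R {b}, Submodule.fg_span_singleton b⟩)
    (N P : {N : Submodule R A // N.FG}) : W ⟨N.1 * P.1, N.2.mul P.2⟩ = W N * W P := by
  obtain ⟨N, hN⟩ := N
  obtain ⟨P, hP⟩ := P
  induction N, hN using Submodule.fg_induction with
  | singleton a =>
    induction P, hP using Submodule.fg_induction with
    | singleton b =>
      simp only [Submodule.span_mul_span, Set.singleton_mul_singleton, hsingleton]
    | sup P Q hP hQ ihP ihQ =>
      have ha := Submodule.fg_span_singleton (R := R) a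
      simp only [Submodule.mul_sup]
      rw [hsup ⟨_, ha.mul hP⟩ ⟨_, ha.mul hQ⟩, hsup ⟨P, hP⟩ ⟨Q, hQ⟩, mul_add, ihP, ihQ]
  | sup N Q hN hQ ihN ihQ =>
    simp only [Submodule.sup_mul]
    rw [hsup ⟨_, hN.mul hP⟩ ⟨_, hQ.mul hP⟩, hsup ⟨N, hN⟩ ⟨Q, hQ⟩, add_mul, ihN, ihQ]

theorem stmt18_general [IdemSemiring β] {w : A → β} (hmul : ∀ a b : A, w (a * b) = w a * w b)
    (hadd : ∀ a b : A, w (a + b) ≤ w a + w b) (hcontr : ∀ r : R, w (algebraMap R A r) ≤ 1) :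
    ∃! W : {N : Submodule R A // N.FG} → β,
      (∀ a, W ⟨Submodule.span R {a}, Submodule.fg_span_singleton a⟩ = w a) ∧
      (∀ N P, W ⟨N.1 ⊔ P.1, N.2.sup P.2⟩ = W N + W P) ∧
      (∀ N P, W ⟨N.1 * P.1, N.2.mul P.2⟩ = W N * W P) := by
  have hsmul (r : R) (a : A) : w (r • a) ≤ w a := by
    rw [Algebra.smul_def, hmul]
    exact mul_le_of_le_one_left' (hcontr r)
  simp only [add_eq_sup] at hadd
  obtain ⟨W, ⟨hspan, hsup⟩, hunique⟩ := existsUnique_fg_submodule_map_sup hsmul hadd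
  simp only [← add_eq_sup] at hsup hunique
  refine ⟨W, ⟨hspan, hsup, fg_submodule_map_mul hsup fun a b => ?_⟩,
    fun V ⟨hVspan, hVsup, _⟩ => hunique V ⟨hVspan, hVsup⟩⟩
  rw [hspan, hspan, hspan, hmul]

end Multiplicative

/-- Universal property of the free semiring `B^c A` of finitely generated ideals of a
commutative ring `A`: every contracting (integral) semivaluation `w : A → β` into a
commutative idempotent semiring `β` (canonical order `b ≤ c ↔ b + c = c`) factors
uniquely through the map `a ↦ (a)` from `A` to finitely generated ideals, via a map
turning ideal sums into semiring sums (joins) and ideal products into products. -/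
theorem stmt18 {A : Type*} [CommRing A] {β : Type*} [CommSemiring β]
    (hidem : ∀ b : β, b + b = b)
    (w : A → β) (h0 : w 0 = 0) (h1 : w 1 = 1)
    (hmul : ∀ a b : A, w (a * b) = w a * w b)
    (hadd : ∀ a b : A, w (a + b) + (w a + w b) = w a + w b)
    (hcontr : ∀ a : A, w a + 1 = 1) :
    ∃! W : {I : Ideal A // I.FG} → β,
      (∀ a : A, W ⟨Ideal.span {a}, Submodule.fg_span_singleton a⟩ = w a) ∧
      (∀ I J : {I : Ideal A // I.FG}, W ⟨I.1 ⊔ J.1, Submodule.FG.sup I.2 J.2⟩ = W I + W J) ∧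
      (∀ I J : {I : Ideal A // I.FG}, W ⟨I.1 * J.1, Submodule.FG.mul I.2 J.2⟩ = W I * W J) := by
  let := IdemSemiring.ofSemiring hidem
  exact stmt18_general (R := A) hmul hadd hcontr
end
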